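/- Let a = {aⱼ} be a summable, non-increasing sequence of positive real numbers with associated Cantor set C_a. Then the packing dimension and the pre-packing dimension of C_a coincide: sup{s>0 : P^{h_s}(C_a)=∞} = sup{s>0 : P₀^{h_s}(C_a)=∞}, where h_s(x)=x^s. In particular, the packing dimension of C_a equals its upper box dimension. -/

import Mathlib

open Set Filter Metric MeasureTheory
open scoped ENNReal NNReal Topology

noncomputable section

/-- The `h`-Hausdorff measure of `E ⊆ ℝ`:
`H^h(E) = lim_{δ→0⁺} inf {Σᵢ h(|Eᵢ|) : E ⊆ ⋃ᵢ Eᵢ, |Eᵢ| ≤ δ}`.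
Since the inner infimum is antitone in `δ`, the limit as `δ → 0⁺` is the
supremum over `0 < δ ≤ A` (the parameter `A` records the domain `(0,A]` of the
dimension function `h`; by monotonicity the value of the limit is unchanged). -/
def Hh (A : ℝ) (h : ℝ → ℝ≥0∞) (E : Set ℝ) : ℝ≥0∞ :=
  ⨆ (δ : ℝ) (_ : 0 < δ) (_ : δ ≤ A),
    ⨅ (t : ℕ → Set ℝ) (_ : E ⊆ ⋃ n, t n) (_ : ∀ n, Metric.diam (t n) ≤ δ),
      ∑' n, h (Metric.diam (t n))

/-- A `δ`-packing of `E`: a countable disjoint family of open balls centered at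
points of `E` with diameters less than `δ`, recorded as a set of
(center, radius) pairs. -/
def IsPacking (E : Set ℝ) (δ : ℝ) (P : Set (ℝ × ℝ)) : Prop :=
  P.Countable ∧ (∀ p ∈ P, p.1 ∈ E ∧ 0 < p.2 ∧ 2 * p.2 < δ) ∧
    P.PairwiseDisjoint fun p => Metric.ball p.1 p.2

/-- The `h`-packing pre-measure of `E ⊆ ℝ`:
`P₀^h(E) = lim_{δ→0⁺} sup {Σᵢ h(|Bᵢ|) : {Bᵢ} is a δ-packing of E}`.
The inner supremum is monotone in `δ`, so the limit as `δ → 0⁺` is the infimum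
over `0 < δ ≤ A`. -/
def P0h (A : ℝ) (h : ℝ → ℝ≥0∞) (E : Set ℝ) : ℝ≥0∞ :=
  ⨅ (δ : ℝ) (_ : 0 < δ) (_ : δ ≤ A),
    ⨆ (P : Set (ℝ × ℝ)) (_ : IsPacking E δ P), ∑' p : P, h (2 * (p : ℝ × ℝ).2)

/-- The `h`-packing measure: `P^h(E) = inf {Σᵢ P₀^h(Eᵢ) : E = ⋃ᵢ Eᵢ}`. -/
def Ph (A : ℝ) (h : ℝ → ℝ≥0∞) (E : Set ℝ) : ℝ≥0∞ :=
  ⨅ (t : ℕ → Set ℝ) (_ : E = ⋃ n, t n), ∑' n, P0h A h (t n)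

/-- `h` is a dimension function with domain `(0, A]`: continuous, increasing,
doubling, positive, with `h(x) → 0` as `x → 0⁺`.  We record partial functions
`(0,A] → (0,∞]` as functions `ℝ → ℝ≥0∞` extended by `0` on nonpositive
arguments (the continuous extension at `0`). -/
structure IsDimFun (A : ℝ) (h : ℝ → ℝ≥0∞) : Prop where
  posA : 0 < A
  zero_of_nonpos : ∀ x : ℝ, x ≤ 0 → h x = 0
  pos : ∀ x ∈ Set.Ioc (0 : ℝ) A, 0 < h x
  continuousOn : ContinuousOn h (Set.Ioc 0 A)
  strictMonoOn : StrictMonoOn h (Set.Ioc 0 A)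
  doubling : ∃ τ : ℝ≥0∞, 0 < τ ∧ τ ≠ ∞ ∧ ∀ x : ℝ, 0 < x → 2 * x ≤ A → τ * h (2 * x) ≤ h x
  tendsto_zero : Tendsto h (nhdsWithin 0 (Set.Ioi 0)) (nhds 0)

/-- `f ≼ h` on `(0, A]`: there is a (finite, positive) constant `c` with
`f(x) ≤ c·h(x)` for all `x ∈ (0,A]`. -/
def FLeq (A : ℝ) (f h : ℝ → ℝ≥0∞) : Prop :=
  ∃ c : ℝ≥0∞, 0 < c ∧ c ≠ ∞ ∧ ∀ x ∈ Set.Ioc (0 : ℝ) A, f x ≤ c * h x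

/-- `f ≡ h` on `(0, A]`: `f ≼ h` and `h ≼ f`. -/
def FEquiv (A : ℝ) (f h : ℝ → ℝ≥0∞) : Prop := FLeq A f h ∧ FLeq A h f

/-- Tail of a series: `rTail a n = Σ_{j ≥ n} a j` (0-based indexing, so the
paper's `r_n`, `n ≥ 1`, is `rTail a (n-1)`). -/
def rTail (a : ℕ → ℝ) (n : ℕ) : ℝ := ∑' k : ℕ, a (n + k)

/-- In the Cantor construction for the gap sequence `a`, the gaps are indexed
by the nodes `m ≥ 1` of the infinite binary tree in heap order (node `m` has
children `2m, 2m+1`), the gap at node `m` having length `a (m-1)`.  `nodeLen a m`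
is the sum of the lengths of all gaps in the subtree rooted at `m`, i.e. the
length of the step interval corresponding to node `m`. -/
def nodeLen (a : ℕ → ℝ) (m : ℕ) : ℝ :=
  ∑' k : ℕ, ∑ i ∈ Finset.range (2 ^ k), a (m * 2 ^ k + i - 1)

/-- Left endpoint of the `j`-th (0 ≤ j < 2^k, left to right) step-`k` interval
in the Cantor construction for the gap sequence `a` (realized in `[0, Σ a]`):
a left child keeps its parent's left endpoint; a right child's interval starts
after its left sibling's interval followed by the parent's gap. -/
def leftEnd (a : ℕ → ℝ) : ℕ → ℕ → ℝ
  | 0, _ => 0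
  | (k + 1), j =>
    if j % 2 = 0 then leftEnd a k (j / 2)
    else leftEnd a k (j / 2) + nodeLen a (2 ^ (k + 1) + j - 1) + a (2 ^ k + j / 2 - 1)

/-- The Cantor set `C_a` associated with a (positive, non-increasing, summable)
sequence `a`, realized inside the interval `[0, Σ a]`: the intersection over
`k` of the unions of the `2^k` step-`k` intervals. -/
def cantorSetOf (a : ℕ → ℝ) : Set ℝ :=
  ⋂ k : ℕ, ⋃ j ∈ Finset.range (2 ^ k),
    Set.Icc (leftEnd a k j) (leftEnd a k j + nodeLen a (2 ^ k + j))

/-- `h` (increasing and continuous on `(0, A]`) is associated to the sequence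
`a`: the sequence `{h(r_n/n)}` is equivalent to `{1/n}`, i.e. there are
constants `0 < c₁, c₂ < ∞` with `c₁ ≤ n · h(r_n/n) ≤ c₂` for all `n ≥ 1`
(0-based: `n ≥ 1` corresponds to `n+1` below). -/
def IsAssociated (A : ℝ) (h : ℝ → ℝ≥0∞) (a : ℕ → ℝ) : Prop :=
  ContinuousOn h (Set.Ioc 0 A) ∧ StrictMonoOn h (Set.Ioc 0 A) ∧
  ∃ c₁ c₂ : ℝ≥0∞, 0 < c₁ ∧ c₂ ≠ ∞ ∧ ∀ n : ℕ,
    c₁ ≤ ((n : ℝ≥0∞) + 1) * h (rTail a n / ((n : ℝ) + 1)) ∧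
    ((n : ℝ≥0∞) + 1) * h (rTail a n / ((n : ℝ) + 1)) ≤ c₂

/-- Weak tail-equivalence: there are positive integers `j, k` with
`r_n^{(a)} ≥ r_{jn}^{(b)}/j` and `r_n^{(b)} ≥ r_{kn}^{(a)}/k` for all `n ≥ 1`
(0-based shift: paper's `r_n` is `rTail · (n-1)`). -/
def WeakTailEquiv (a b : ℕ → ℝ) : Prop :=
  ∃ j k : ℕ, 0 < j ∧ 0 < k ∧
    (∀ n : ℕ, rTail b (j * (n + 1) - 1) / (j : ℝ) ≤ rTail a n) ∧
    (∀ n : ℕ, rTail a (k * (n + 1) - 1) / (k : ℝ) ≤ rTail b n)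

/-- Tail-equivalence: the sequences of tails are equivalent, i.e. the ratios
`r_n^{(a)}/r_n^{(b)}` are bounded above and below by positive constants. -/
def TailEquiv (a b : ℕ → ℝ) : Prop :=
  ∃ c₁ c₂ : ℝ, 0 < c₁ ∧ ∀ n : ℕ,
    c₁ ≤ rTail a n / rTail b n ∧ rTail a n / rTail b n ≤ c₂

/-- The Hausdorff dimension of `E`, computed from the `h_s`-Hausdorff measures,
`h_s(x) = x^s`:  `dim_H E = sup {s > 0 : H^{h_s}(E) = ∞}`. -/
def hausdDim (A : ℝ) (E : Set ℝ) : ℝ≥0∞ :=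
  ⨆ (s : ℝ) (_ : 0 < s) (_ : Hh A (fun x => ENNReal.ofReal (x ^ s)) E = ∞),
    ENNReal.ofReal s

/-- The packing dimension of `E`: `dim_P E = sup {s > 0 : P^{h_s}(E) = ∞}`. -/
def packDim (A : ℝ) (E : Set ℝ) : ℝ≥0∞ :=
  ⨆ (s : ℝ) (_ : 0 < s) (_ : Ph A (fun x => ENNReal.ofReal (x ^ s)) E = ∞),
    ENNReal.ofReal s

/-- The pre-packing dimension of `E`: `dim_{P₀} E = sup {s > 0 : P₀^{h_s}(E) = ∞}`. -/
def prePackDim (A : ℝ) (E : Set ℝ) : ℝ≥0∞ :=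
  ⨆ (s : ℝ) (_ : 0 < s) (_ : P0h A (fun x => ENNReal.ofReal (x ^ s)) E = ∞),
    ENNReal.ofReal s

/-- `f ≼ h` on the set `S`, for real-valued functions. -/
def RLeqOn (S : Set ℝ) (f h : ℝ → ℝ) : Prop :=
  ∃ c : ℝ, 0 < c ∧ ∀ x ∈ S, f x ≤ c * h x

/-- `f ≡ h` on the set `S`, for real-valued functions. -/
def REquivOn (S : Set ℝ) (f h : ℝ → ℝ) : Prop := RLeqOn S f h ∧ RLeqOn S h f

/-- Real-valued version of `IsAssociated`: `h : (0,A] → (0,∞)` is increasing,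
continuous, positive and `{h(r_n/n)} ≡ {1/n}`. -/
def IsAssociatedR (A : ℝ) (h : ℝ → ℝ) (a : ℕ → ℝ) : Prop :=
  ContinuousOn h (Set.Ioc 0 A) ∧ StrictMonoOn h (Set.Ioc 0 A) ∧
  (∀ x ∈ Set.Ioc (0 : ℝ) A, 0 < h x) ∧
  ∃ c₁ c₂ : ℝ, 0 < c₁ ∧ ∀ n : ℕ,
    c₁ ≤ ((n : ℝ) + 1) * h (rTail a n / ((n : ℝ) + 1)) ∧
    ((n : ℝ) + 1) * h (rTail a n / ((n : ℝ) + 1)) ≤ c₂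

end

section CantorHelpers

variable {a : ℕ → ℝ}

lemma aux_anti (amono : ∀ n, a (n + 1) ≤ a n) : Antitone a := antitone_nat_of_succ_le amono

lemma aux_block (a : ℕ → ℝ) (K : ℕ) :
    ∑ k ∈ Finset.range K, ∑ i ∈ Finset.range (2 ^ k), a (2 ^ k + i - 1)
      = ∑ n ∈ Finset.range (2 ^ K - 1), a n := by
  induction K with
  | zero => simp
  | succ K ih =>
    rw [Finset.sum_range_succ, ih]
    have h1 : 2 ^ (K + 1) - 1 = (2 ^ K - 1) + 2 ^ K := by
      have := Nat.one_le_two_pow (n := K)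
      rw [pow_succ]; omega
    rw [h1, Finset.sum_range_add]
    congr 1
    apply Finset.sum_congr rfl
    intro i _
    congr 1
    have := Nat.one_le_two_pow (n := K)
    omega

lemma aux_sum1 (apos : ∀ n, 0 < a n) (asum : Summable a) :
    Summable (fun k : ℕ => ∑ i ∈ Finset.range (2 ^ k), a (2 ^ k + i - 1)) := by
  apply summable_of_sum_range_le (c := ∑' n, a n)
  · intro k; exact Finset.sum_nonneg fun i _ => (apos _).le
  · intro K
    rw [aux_block]
    exact asum.sum_le_tsum _ fun i _ => (apos i).le

lemma aux_sum (apos : ∀ n, 0 < a n) (amono : ∀ n, a (n + 1) ≤ a n) (asum : Summable a)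
    {m : ℕ} (hm : 1 ≤ m) :
    Summable (fun k : ℕ => ∑ i ∈ Finset.range (2 ^ k), a (m * 2 ^ k + i - 1)) := by
  refine Summable.of_nonneg_of_le (fun k => Finset.sum_nonneg fun i _ => (apos _).le) ?_
    (aux_sum1 apos asum)
  intro k
  refine Finset.sum_le_sum fun i _ => aux_anti amono ?_
  have : 1 * 2 ^ k ≤ m * 2 ^ k := Nat.mul_le_mul_right _ hm
  omega

lemma nodeLen_anti (apos : ∀ n, 0 < a n) (amono : ∀ n, a (n + 1) ≤ a n) (asum : Summable a)
    {m n : ℕ} (hm : 1 ≤ m) (h : m ≤ n) : nodeLen a n ≤ nodeLen a m := by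
  refine (aux_sum apos amono asum (hm.trans h)).tsum_le_tsum ?_ (aux_sum apos amono asum hm)
  intro k
  refine Finset.sum_le_sum fun i _ => aux_anti amono ?_
  have : m * 2 ^ k ≤ n * 2 ^ k := Nat.mul_le_mul_right _ h
  omega

lemma nodeLen_rec (apos : ∀ n, 0 < a n) (amono : ∀ n, a (n + 1) ≤ a n) (asum : Summable a)
    {m : ℕ} (hm : 1 ≤ m) :
    nodeLen a m = a (m - 1) + nodeLen a (2 * m) + nodeLen a (2 * m + 1) := by
  have h1 := aux_sum apos amono asum hm
  have h2 := aux_sum apos amono asum (m := 2 * m) (by omega)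
  have h3 := aux_sum apos amono asum (m := 2 * m + 1) (by omega)
  unfold nodeLen
  rw [h1.tsum_eq_zero_add, add_assoc, ← h2.tsum_add h3]
  congr 1
  · simp
  · congr 1
    ext k
    rw [pow_succ, mul_two, Finset.sum_range_add]
    congr 1
    · refine Finset.sum_congr rfl fun i _ => ?_
      congr 2; ring
    · refine Finset.sum_congr rfl fun i _ => ?_
      congr 2; ring

lemma nodeLen_nonneg (apos : ∀ n, 0 < a n) (m : ℕ) : 0 ≤ nodeLen a m :=
  tsum_nonneg fun _ => Finset.sum_nonneg fun _ _ => (apos _).le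

lemma nodeLen_pos (apos : ∀ n, 0 < a n) (amono : ∀ n, a (n + 1) ≤ a n) (asum : Summable a)
    {m : ℕ} (hm : 1 ≤ m) : 0 < nodeLen a m := by
  rw [nodeLen_rec apos amono asum hm]
  have := apos (m - 1)
  have := nodeLen_nonneg apos (2 * m)
  have := nodeLen_nonneg apos (2 * m + 1)
  linarith

lemma nodeLen_tendsto (apos : ∀ n, 0 < a n) (amono : ∀ n, a (n + 1) ≤ a n) (asum : Summable a) :
    Tendsto (fun L : ℕ => nodeLen a (2 ^ L)) atTop (𝓝 0) := by
  obtain ⟨f, hf⟩ : ∃ f : ℕ → ℝ, f = fun k : ℕ =>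
    ∑ i ∈ Finset.range (2 ^ k), a (2 ^ k + i - 1) := ⟨_, rfl⟩
  have h1 : Summable f := hf ▸ aux_sum1 apos asum
  have h0 : ∀ L : ℕ, nodeLen a (2 ^ L) ≤ ∑' k, f (k + L) := by
    intro L
    refine (aux_sum apos amono asum Nat.one_le_two_pow).tsum_le_tsum ?_
      ((summable_nat_add_iff L).2 h1)
    intro k
    rw [hf]
    beta_reduce
    rw [← pow_add, add_comm L k]
    exact Finset.sum_le_sum_of_subset_of_nonneg
      (Finset.range_mono (Nat.pow_le_pow_right (by norm_num) (by omega)))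
      fun i _ _ => (apos _).le
  exact squeeze_zero (fun L => nodeLen_nonneg apos _) h0 (tendsto_sum_nat_add f)

/-- children intervals sit inside the parent -/
lemma leftEnd_child (apos : ∀ n, 0 < a n) (amono : ∀ n, a (n + 1) ≤ a n) (asum : Summable a)
    (k j : ℕ) :
    leftEnd a k (j / 2) ≤ leftEnd a (k + 1) j ∧
    leftEnd a (k + 1) j + nodeLen a (2 ^ (k + 1) + j)
      ≤ leftEnd a k (j / 2) + nodeLen a (2 ^ k + j / 2) := by
  have hp : 1 ≤ 2 ^ k := Nat.one_le_two_pow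
  have hr := nodeLen_rec apos amono asum (m := 2 ^ k + j / 2) (by omega)
  have h1 := apos (2 ^ k + j / 2 - 1)
  have h2 := nodeLen_nonneg apos (2 * (2 ^ k + j / 2))
  have h3 := nodeLen_nonneg apos (2 * (2 ^ k + j / 2) + 1)
  have hs : 2 ^ (k + 1) = 2 * 2 ^ k := by ring
  rw [leftEnd]
  split_ifs with h
  · have e : 2 ^ (k + 1) + j = 2 * (2 ^ k + j / 2) := by omega
    rw [e]
    constructor <;> linarith
  · have e : 2 ^ (k + 1) + j = 2 * (2 ^ k + j / 2) + 1 := by omega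
    have e' : 2 ^ (k + 1) + j - 1 = 2 * (2 ^ k + j / 2) := by omega
    rw [e', e]
    constructor <;> linarith

lemma leftEnd_desc (apos : ∀ n, 0 < a n) (amono : ∀ n, a (n + 1) ≤ a n) (asum : Summable a)
    (k j d : ℕ) : ∀ u < 2 ^ d,
    leftEnd a k j ≤ leftEnd a (k + d) (j * 2 ^ d + u) ∧
    leftEnd a (k + d) (j * 2 ^ d + u) + nodeLen a (2 ^ (k + d) + (j * 2 ^ d + u))
      ≤ leftEnd a k j + nodeLen a (2 ^ k + j) := by
  induction d with
  | zero => intro u hu; have : u = 0 := by simpa using hu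
            subst this; simp
  | succ d ih =>
    intro u hu
    have hu2 : u / 2 < 2 ^ d := by rw [pow_succ] at hu; omega
    have e : (j * 2 ^ (d + 1) + u) / 2 = j * 2 ^ d + u / 2 := by
      have : j * 2 ^ (d + 1) = 2 * (j * 2 ^ d) := by ring
      omega
    have h1 := ih _ hu2
    have h2 := leftEnd_child apos amono asum (k + d) (j * 2 ^ (d + 1) + u)
    rw [e] at h2
    rw [← add_assoc k d 1]
    exact ⟨h1.1.trans h2.1, h2.2.trans h1.2⟩

lemma leftEnd_mul (k j d : ℕ) : leftEnd a (k + d) (j * 2 ^ d) = leftEnd a k j := by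
  induction d with
  | zero => simp
  | succ d ih =>
    have e : j * 2 ^ (d + 1) = 2 * (j * 2 ^ d) := by ring
    rw [← add_assoc, leftEnd, e, if_pos (by omega), Nat.mul_div_cancel_left _ (by norm_num), ih]

lemma leftEnd_mem (apos : ∀ n, 0 < a n) (amono : ∀ n, a (n + 1) ≤ a n) (asum : Summable a)
    {k j : ℕ} (hj : j < 2 ^ k) : leftEnd a k j ∈ cantorSetOf a := by
  simp only [cantorSetOf, mem_iInter, mem_iUnion, Finset.mem_range]
  intro n
  rcases le_total k n with h | h
  · obtain ⟨d, rfl⟩ := Nat.exists_eq_add_of_le h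
    refine ⟨j * 2 ^ d, ?_, ?_⟩
    · rw [pow_add]; exact Nat.mul_lt_mul_of_pos_right hj (by positivity)
    · rw [leftEnd_mul]
      exact ⟨le_rfl, by linarith [nodeLen_nonneg apos (2 ^ (k + d) + j * 2 ^ d)]⟩
  · obtain ⟨d, rfl⟩ := Nat.exists_eq_add_of_le h
    have hd : 0 < 2 ^ d := by positivity
    refine ⟨j / 2 ^ d, ?_, ?_⟩
    · rw [pow_add] at hj
      exact (Nat.div_lt_iff_lt_mul hd).2 hj
    · have := leftEnd_desc apos amono asum n (j / 2 ^ d) d (j % 2 ^ d) (Nat.mod_lt _ hd)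
      rw [Nat.div_add_mod'] at this
      exact ⟨this.1, by linarith [nodeLen_nonneg apos (2 ^ (n + d) + j)]⟩

lemma leftEnd_succ (apos : ∀ n, 0 < a n) (amono : ∀ n, a (n + 1) ≤ a n) (asum : Summable a)
    (N : ℕ) : ∀ j, j + 1 < 2 ^ N →
    leftEnd a N j + nodeLen a (2 ^ N + j) ≤ leftEnd a N (j + 1) := by
  induction N with
  | zero => intro j hj; simp at hj
  | succ N ih =>
    intro j hj
    rcases Nat.even_or_odd' j with ⟨c, rfl | rfl⟩
    · have e1 : (2 * c + 1) / 2 = c := by omega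
      rw [leftEnd, leftEnd, if_pos (by omega), if_neg (by omega), e1,
        Nat.mul_div_cancel_left _ (by norm_num)]
      have e2 : 2 ^ (N + 1) + (2 * c + 1) - 1 = 2 ^ (N + 1) + 2 * c := by omega
      rw [e2]
      linarith [apos (2 ^ N + c - 1)]
    · have h1 := (leftEnd_child apos amono asum N (2 * c + 1)).2
      have e1 : (2 * c + 1) / 2 = c := by omega
      rw [e1] at h1
      have h2 := ih c (by rw [pow_succ] at hj; omega)
      have h3 := (leftEnd_child apos amono asum N (2 * c + 1 + 1)).1
      have e3 : (2 * c + 1 + 1) / 2 = c + 1 := by omega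
      rw [e3] at h3
      linarith

lemma leftEnd_sep (apos : ∀ n, 0 < a n) (amono : ∀ n, a (n + 1) ≤ a n) (asum : Summable a)
    (N i j : ℕ) (hij : i < j) (hj : j < 2 ^ N) :
    leftEnd a N i + nodeLen a (2 ^ (N + 1)) ≤ leftEnd a N j := by
  induction j, hij using Nat.le_induction with
  | base =>
    have h1 := leftEnd_succ apos amono asum N i hj
    have h2 := nodeLen_anti apos amono asum (m := 2 ^ N + i) (n := 2 ^ (N + 1))
      (by have := Nat.one_le_two_pow (n := N); omega) (by rw [pow_succ]; omega)
    linarith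
  | succ j hij ih =>
    have h1 := ih (by omega)
    have h2 := leftEnd_succ apos amono asum N j hj
    linarith [nodeLen_nonneg apos (2 ^ N + j)]

lemma cantor_closed (a : ℕ → ℝ) : IsClosed (cantorSetOf a) :=
  isClosed_iInter fun _ => (Finset.finite_toSet _).isClosed_biUnion fun _ _ => isClosed_Icc

/-- The decisive estimate: growth bound on lengths gives finite pre-measure. -/
lemma P0h_lt_top_of_bound (A : ℝ) (hA : 0 < A) (apos : ∀ n, 0 < a n)
    (amono : ∀ n, a (n + 1) ≤ a n) (asum : Summable a) {s : ℝ} (hs : 0 < s)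
    (N0 : ℕ) (K : ℝ) (hK : ∀ N, N0 ≤ N → 2 ^ N * (nodeLen a (2 ^ N)) ^ s ≤ K) :
    P0h A (fun x => ENNReal.ofReal (x ^ s)) (cantorSetOf a) ≠ ∞ := by
  have hl0 : 0 < nodeLen a (2 ^ N0) := nodeLen_pos apos amono asum Nat.one_le_two_pow
  have hK0 : 0 ≤ K := le_trans (by have := Real.rpow_pos_of_pos hl0 s; positivity) (hK N0 le_rfl)
  refine ne_top_of_le_ne_top (b := ENNReal.ofReal (2 ^ s * K * 2)) ENNReal.ofReal_ne_top ?_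
  refine iInf_le_of_le (min A (nodeLen a (2 ^ N0))) <| iInf_le_of_le (lt_min hA hl0) <|
    iInf_le_of_le (min_le_left _ _) ?_
  refine iSup₂_le fun P hP => ?_
  obtain ⟨-, hP1, hP2⟩ := hP
  have key : ∀ p ∈ P, ∃ L j : ℕ, j < 2 ^ L ∧ (2 * p.2) ^ s ≤ 2 ^ s * K * 2 / 2 ^ L ∧
      Icc (leftEnd a L j) (leftEnd a L j + nodeLen a (2 ^ L + j)) ⊆ ball p.1 p.2 := by
    intro p hp
    obtain ⟨hpC, hr, hrd⟩ := hP1 p hp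
    have hrN : p.2 < nodeLen a (2 ^ N0) := by
      have := min_le_right A (nodeLen a (2 ^ N0)); linarith
    have hex : ∃ L, nodeLen a (2 ^ L) < p.2 :=
      ((nodeLen_tendsto apos amono asum).eventually (gt_mem_nhds hr)).exists
    classical
    set L := Nat.find hex with hL
    have hLs : nodeLen a (2 ^ L) < p.2 := Nat.find_spec hex
    have hLN : N0 < L := by
      by_contra hcon
      have := nodeLen_anti apos amono asum (m := 2 ^ L) (n := 2 ^ N0) Nat.one_le_two_pow
        (Nat.pow_le_pow_right (by norm_num) (by omega))
      linarith
    obtain ⟨M, hM⟩ : ∃ M, L = M + 1 := ⟨L - 1, by omega⟩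
    have hMr : p.2 ≤ nodeLen a (2 ^ M) := by
      have := Nat.find_min hex (m := M) (by omega)
      linarith
    have hKM := hK M (by omega)
    have hx := hpC
    simp only [cantorSetOf, mem_iInter, mem_iUnion, Finset.mem_range] at hx
    obtain ⟨j, hj, hxj⟩ := hx L
    refine ⟨L, j, hj, ?_, ?_⟩
    · have h1 : (2 * p.2) ^ s ≤ (2 * nodeLen a (2 ^ M)) ^ s :=
        Real.rpow_le_rpow (by positivity) (by linarith) hs.le
      rw [Real.mul_rpow (by norm_num) (nodeLen_nonneg apos _)] at h1
      refine h1.trans ?_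
      rw [le_div_iff₀ (by positivity), hM, pow_succ]
      have h2 : (0:ℝ) < 2 ^ s := by positivity
      nlinarith
    · intro y hy
      have h2 := nodeLen_anti apos amono asum (m := 2 ^ L) (n := 2 ^ L + j)
        Nat.one_le_two_pow (by omega)
      rw [mem_ball, Real.dist_eq, abs_lt]
      constructor <;> linarith [hy.1, hy.2, hxj.1, hxj.2]
  choose! L j hj hb hI using key
  rw [ENNReal.tsum_eq_iSup_sum]
  refine iSup_le fun F => ?_
  classical
  rw [← ENNReal.ofReal_sum_of_nonneg]
  swap
  · intro p _
    have := (hP1 p.1 p.2).2.1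
    positivity
  apply ENNReal.ofReal_le_ofReal
  set N := F.sup (fun p => L p.1) with hN
  have hLN : ∀ p ∈ F, L p.1 ≤ N := fun p hp => Finset.le_sup (f := fun p : P => L p.1) hp
  have hcount : ∑ p ∈ F, 2 ^ (N - L p.1) ≤ 2 ^ N := by
    let S : P → Finset ℕ := fun p =>
      (Finset.range (2 ^ N)).filter (fun i => leftEnd a N i ∈ ball p.1.1 p.1.2)
    have hS : ∀ p ∈ F, 2 ^ (N - L p.1) ≤ (S p).card := by
      intro p hp
      obtain ⟨d, hd⟩ := Nat.exists_eq_add_of_le (hLN p hp)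
      have hd' : N - L p.1 = d := by omega
      rw [hd']
      have himg : (Finset.range (2 ^ d)).image (fun u => j p.1 * 2 ^ d + u) ⊆ S p := by
        intro i hi
        simp only [Finset.mem_image, Finset.mem_range] at hi
        obtain ⟨u, hu, rfl⟩ := hi
        have hdesc := leftEnd_desc apos amono asum (L p.1) (j p.1) d u hu
        rw [← hd] at hdesc
        simp only [S, Finset.mem_filter, Finset.mem_range]
        constructor
        · have := hj p.1 p.2
          have h3 : (j p.1 + 1) * 2 ^ d ≤ 2 ^ L p.1 * 2 ^ d := Nat.mul_le_mul_right _ this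
          rw [hd, pow_add]
          nlinarith
        · apply hI p.1 p.2
          exact ⟨hdesc.1, by linarith [nodeLen_nonneg apos (2 ^ N + (j p.1 * 2 ^ d + u))]⟩
      refine le_trans (le_of_eq ?_) (Finset.card_le_card himg)
      rw [Finset.card_image_of_injective _ (fun x y h => by simpa using h), Finset.card_range]
    calc ∑ p ∈ F, 2 ^ (N - L p.1) ≤ ∑ p ∈ F, (S p).card := Finset.sum_le_sum hS
      _ = (F.biUnion S).card := by
        rw [Finset.card_biUnion]
        intro p _ q _ hpq
        rw [Function.onFun, Finset.disjoint_left]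
        intro i hi hi'
        simp only [S, Finset.mem_filter] at hi hi'
        exact Set.disjoint_left.1 (hP2 p.2 q.2 (fun h => hpq (Subtype.ext h))) hi.2 hi'.2
      _ ≤ (Finset.range (2 ^ N)).card := by
        apply Finset.card_le_card
        intro i hi
        simp only [S, Finset.mem_biUnion, Finset.mem_filter] at hi
        obtain ⟨_, _, h, _⟩ := hi
        exact h
      _ = 2 ^ N := Finset.card_range _
  have hcount' : ∑ p ∈ F, (2:ℝ) ^ (N - L p.1) ≤ 2 ^ N := by exact_mod_cast hcount
  calc ∑ p ∈ F, (2 * p.1.2) ^ s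
      ≤ ∑ p ∈ F, (2 ^ s * K * 2 / 2 ^ N) * (2:ℝ) ^ (N - L p.1) := by
        refine Finset.sum_le_sum fun p hp => (hb p.1 p.2).trans (le_of_eq ?_)
        have : (2:ℝ) ^ N = 2 ^ (N - L p.1) * 2 ^ (L p.1) := by
          rw [← pow_add, Nat.sub_add_cancel (hLN p hp)]
        rw [this]
        field_simp
    _ = (2 ^ s * K * 2 / 2 ^ N) * ∑ p ∈ F, (2:ℝ) ^ (N - L p.1) := by rw [Finset.mul_sum]
    _ ≤ (2 ^ s * K * 2 / 2 ^ N) * 2 ^ N := by gcongr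
    _ = 2 ^ s * K * 2 := by field_simp

lemma P0h_empty (A : ℝ) (hA : 0 < A) (h : ℝ → ℝ≥0∞) : P0h A h ∅ = 0 := by
  apply le_antisymm _ bot_le
  refine iInf_le_of_le A <| iInf_le_of_le hA <| iInf_le_of_le le_rfl ?_
  refine iSup₂_le fun P hP => ?_
  have : P = ∅ := by
    ext p
    simp only [mem_empty_iff_false, iff_false]
    exact fun hp => (hP.2.1 p hp).1
  subst this
  simp

lemma Ph_le_P0h (A : ℝ) (hA : 0 < A) (h : ℝ → ℝ≥0∞) (E : Set ℝ) : Ph A h E ≤ P0h A h E := by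
  refine iInf_le_of_le (fun n => if n = 0 then E else ∅) <| iInf_le_of_le ?_ ?_
  · ext x
    simp only [mem_iUnion]
    exact ⟨fun hx => ⟨0, by simpa using hx⟩, fun ⟨n, hn⟩ => by
      by_cases h0 : n = 0 <;> simp_all⟩
  · rw [tsum_eq_single 0]
    · simp
    · intro n hn
      simp [hn, P0h_empty A hA]

lemma bound_of_dense (A : ℝ) (apos : ∀ n, 0 < a n)
    (amono : ∀ n, a (n + 1) ≤ a n) (asum : Summable a) {s : ℝ} (hs : 0 < s)
    (E : Set ℝ) (x ε : ℝ) (hx : x ∈ cantorSetOf a) (hε : 0 < ε)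
    (hE : ∀ y ∈ cantorSetOf a, y ∈ ball x ε → y ∈ closure E)
    (hfin : P0h A (fun x => ENNReal.ofReal (x ^ s)) E ≠ ∞) :
    ∃ (N0 : ℕ) (K : ℝ), ∀ N, N0 ≤ N → 2 ^ N * (nodeLen a (2 ^ N)) ^ s ≤ K := by
  have hlt := lt_top_iff_ne_top.2 hfin
  simp only [P0h, iInf_lt_iff] at hlt
  obtain ⟨δ, hδ, -, hlt⟩ := hlt
  set K := ⨆ (P : Set (ℝ × ℝ)) (_ : IsPacking E δ P),
    ∑' p : P, ENNReal.ofReal ((2 * (p : ℝ × ℝ).2) ^ s) with hKdef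
  have hT := nodeLen_tendsto apos amono asum
  obtain ⟨k, hk⟩ := (hT.eventually (gt_mem_nhds hε)).exists
  obtain ⟨M, hM⟩ := eventually_atTop.1 (hT.eventually (gt_mem_nhds hδ))
  have hx' := hx
  simp only [cantorSetOf, mem_iInter, mem_iUnion, Finset.mem_range] at hx'
  obtain ⟨j, hj, hxj⟩ := hx' k
  refine ⟨max M (k + 1), 2 ^ s * 2 ^ (k + 1) * K.toReal, fun N hN => ?_⟩
  have hNM : M ≤ N := (le_max_left _ _).trans hN
  obtain ⟨d, rfl⟩ := Nat.exists_eq_add_of_le ((le_max_right _ _).trans hN)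
  set l := nodeLen a (2 ^ (k + 1 + d)) with hl
  have hlpos : 0 < l := nodeLen_pos apos amono asum Nat.one_le_two_pow
  have hlδ : l < δ := hM _ hNM
  let y : ℕ → ℝ := fun u => leftEnd a (k + d) (j * 2 ^ d + u)
  have hlt2 : ∀ u < 2 ^ d, j * 2 ^ d + u < 2 ^ (k + d) := by
    intro u hu
    have h3 : (j + 1) * 2 ^ d ≤ 2 ^ k * 2 ^ d := Nat.mul_le_mul_right _ hj
    rw [pow_add]
    nlinarith
  have hy : ∀ u < 2 ^ d, ∃ z ∈ E, dist (y u) z < l / 4 := by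
    intro u hu
    have hd := leftEnd_desc apos amono asum k j d u hu
    have hyc : y u ∈ closure E := by
      refine hE _ (leftEnd_mem apos amono asum (hlt2 u hu)) ?_
      have h2 := nodeLen_anti apos amono asum (m := 2 ^ k) (n := 2 ^ k + j)
        Nat.one_le_two_pow (by omega)
      have h4 := nodeLen_nonneg apos (2 ^ (k + d) + (j * 2 ^ d + u))
      rw [mem_ball, Real.dist_eq, abs_lt]
      constructor <;> linarith [hd.1, hd.2, hxj.1, hxj.2]
    exact Metric.mem_closure_iff.1 hyc _ (by positivity)
  choose! z hzE hz using hy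
  have hsep : ∀ u v, u < v → v < 2 ^ d → z u + l / 2 ≤ z v := by
    intro u v huv hv
    have h1 := leftEnd_sep apos amono asum (k + d) (j * 2 ^ d + u) (j * 2 ^ d + v) (by omega)
      (hlt2 v hv)
    have e : k + d + 1 = k + 1 + d := by omega
    rw [e] at h1
    have h2 := hz u (huv.trans hv)
    have h3 := hz v hv
    rw [Real.dist_eq, abs_lt] at h2 h3
    have h4 : y u + l ≤ y v := h1
    linarith [h2.1, h2.2, h3.1, h3.2]
  classical
  let P : Finset (ℝ × ℝ) := (Finset.range (2 ^ d)).image (fun u => (z u, l / 4))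
  have hinj : Set.InjOn (fun u => (z u, l / 4)) (Finset.range (2 ^ d) : Set ℕ) := by
    intro u hu v hv huv
    simp only [Finset.coe_range, mem_Iio] at hu hv
    have h : z u = z v := (Prod.ext_iff.1 huv).1
    rcases lt_trichotomy u v with h1 | h1 | h1
    · linarith [hsep u v h1 hv]
    · exact h1
    · linarith [hsep v u h1 hu]
  have hdis : ∀ p q : ℝ, p + l / 2 ≤ q → Disjoint (ball p (l / 4)) (ball q (l / 4)) := by
    intro p q hpq
    apply ball_disjoint_ball
    rw [Real.dist_eq, abs_sub_comm, abs_of_nonneg (by linarith)]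
    linarith
  have hP : IsPacking E δ (P : Set (ℝ × ℝ)) := by
    refine ⟨P.countable_toSet, ?_, ?_⟩
    · intro p hp
      simp only [P, Finset.coe_image, mem_image, Finset.coe_range, mem_Iio] at hp
      obtain ⟨u, hu, rfl⟩ := hp
      exact ⟨hzE u hu, by positivity, by dsimp only; linarith⟩
    · intro p hp q hq hpq
      simp only [P, Finset.coe_image, mem_image, Finset.coe_range, mem_Iio] at hp hq
      obtain ⟨u, hu, rfl⟩ := hp
      obtain ⟨v, hv, rfl⟩ := hq
      rcases lt_trichotomy u v with h1 | h1 | h1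
      · exact hdis _ _ (hsep u v h1 hv)
      · exact absurd (by rw [h1]) hpq
      · exact (hdis _ _ (hsep v u h1 hu)).symm
  have hle : ∑' p : (P : Set (ℝ × ℝ)), ENNReal.ofReal ((2 * (p : ℝ × ℝ).2) ^ s) ≤ K :=
    le_iSup₂_of_le (P : Set (ℝ × ℝ)) hP le_rfl
  have hcomp : ∑' p : (P : Set (ℝ × ℝ)), ENNReal.ofReal ((2 * (p : ℝ × ℝ).2) ^ s)
      = ENNReal.ofReal (2 ^ d * (l / 2) ^ s) := by
    have h1 := Finset.tsum_subtype' P (fun p : ℝ × ℝ => ENNReal.ofReal ((2 * p.2) ^ s))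
    rw [h1, Finset.sum_image hinj]
    have e : 2 * (l / 4) = l / 2 := by ring
    simp only [e, Finset.sum_const, Finset.card_range, nsmul_eq_mul]
    rw [ENNReal.ofReal_mul (by positivity)]
    congr 1
    rw [ENNReal.ofReal_pow (by norm_num)]
    simp
  rw [hcomp] at hle
  have h5 := (ENNReal.ofReal_le_iff_le_toReal hlt.ne).1 hle
  rw [Real.div_rpow hlpos.le (by norm_num)] at h5
  have h6 : (0:ℝ) < 2 ^ s := by positivity
  calc (2:ℝ) ^ (k + 1 + d) * l ^ s = 2 ^ s * 2 ^ (k + 1) * (2 ^ d * (l ^ s / 2 ^ s)) := by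
        rw [pow_add]; field_simp
    _ ≤ _ := by gcongr

lemma P0h_ne_top_of_Ph (A : ℝ) (hA : 0 < A) (apos : ∀ n, 0 < a n)
    (amono : ∀ n, a (n + 1) ≤ a n) (asum : Summable a) {s : ℝ} (hs : 0 < s)
    (h : Ph A (fun x => ENNReal.ofReal (x ^ s)) (cantorSetOf a) ≠ ∞) :
    P0h A (fun x => ENNReal.ofReal (x ^ s)) (cantorSetOf a) ≠ ∞ := by
  have hlt := lt_top_iff_ne_top.2 h
  simp only [Ph, iInf_lt_iff] at hlt
  obtain ⟨t, ht, hlt⟩ := hlt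
  have hfin : ∀ n, P0h A (fun x => ENNReal.ofReal (x ^ s)) (t n) ≠ ∞ :=
    ENNReal.ne_top_of_tsum_ne_top hlt.ne
  have hcl := cantor_closed a
  have : CompleteSpace (cantorSetOf a) := hcl.completeSpace_coe
  have : Nonempty (cantorSetOf a) :=
    ⟨⟨_, leftEnd_mem apos amono asum (k := 0) (j := 0) (by simp)⟩⟩
  obtain ⟨n, x, hx⟩ := nonempty_interior_of_iUnion_of_closed
    (f := fun n => (Subtype.val ⁻¹' closure (t n) : Set (cantorSetOf a)))
    (fun n => isClosed_closure.preimage continuous_subtype_val) (by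
      ext ⟨y, hy⟩
      simp only [mem_iUnion, mem_preimage, mem_univ, iff_true]
      have hy' := hy
      rw [ht, mem_iUnion] at hy'
      obtain ⟨i, hi⟩ := hy'
      exact ⟨i, subset_closure hi⟩)
  obtain ⟨ε, hε, hb⟩ := Metric.isOpen_iff.1 isOpen_interior x hx
  obtain ⟨N0, K, hK⟩ := bound_of_dense A apos amono asum hs (t n) x.1 ε x.2 hε
    (fun y hy hyb => by
      have h1 := interior_subset (hb (show (⟨y, hy⟩ : cantorSetOf a) ∈ ball x ε from hyb))
      exact h1)
    (hfin n)
  exact P0h_lt_top_of_bound A hA apos amono asum hs N0 K hK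

end CantorHelpers

/-- Corollary (ii): the packing and pre-packing dimensions of
the Cantor set `C_a` coincide:
`sup {s > 0 : P^{h_s}(C_a) = ∞} = sup {s > 0 : P₀^{h_s}(C_a) = ∞}`, where
`h_s(x) = x^s` (the latter supremum being the upper box dimension). -/
theorem packDim_eq_prePackDim_cantor (A : ℝ) (hA : 0 < A) (a : ℕ → ℝ)
    (apos : ∀ n, 0 < a n) (amono : ∀ n, a (n + 1) ≤ a n) (asum : Summable a) :
    packDim A (cantorSetOf a) = prePackDim A (cantorSetOf a) := by
  have key : ∀ s : ℝ, 0 < s →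
      (Ph A (fun x => ENNReal.ofReal (x ^ s)) (cantorSetOf a) = ∞ ↔
        P0h A (fun x => ENNReal.ofReal (x ^ s)) (cantorSetOf a) = ∞) := by
    intro s hs
    constructor
    · intro h
      exact top_le_iff.1 (h ▸ Ph_le_P0h A hA _ _)
    · intro h
      by_contra hc
      exact P0h_ne_top_of_Ph A hA apos amono asum hs hc h
  unfold packDim prePackDim
  refine iSup_congr fun s => iSup_congr fun hs => ?_
  rw [key s hs]
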